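/- Let (D,V) be a Dyer system that is not of spherical type. Then in the ring ℤ[[t]] of formal power series (where every growth series has constant term 1 and is hence invertible), (−1)^{|V|+1} · 𝒢_{(D,V)}(t)^{−1} = Σ_{Y ⊊ V} (−1)^{|Y|} · 𝒢_{(D_Y,Y)}(t)^{−1}, the sum being over all proper subsets Y of V. -/

import Mathlib

/-!
The proof follows the classical argument for Coxeter groups, built on a cocycle that plays the role
of the inversion set.

*The reflection cocycle.* For a group element `r` and a number `k` (the order of a generator, `0`
standing for `∞`) take a copy of `ZMod k`, and let `D` act on the product of all these groups by
conjugating `r`. Sending each generator `x` to the affine map that acts by `x` and then adds `1` at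
`(x, ord x)` respects the defining relations, so `D` acts affinely; the translation part `coc g` is
a cocycle. If `coc g` is nonzero at `r`, multiplying a word for `g` on the left by a power of `r`
changes the exponent of one syllable (`exists_exchange`), and a suitable power deletes a syllable
(`exists_deletion`). It follows that the word length of `g`, with respect to the generators of any
parabolic subgroup containing it, is the total weight of `coc g` (`wordLength_eq_nrm`).

*Cosets.* Let `A_Y` be the set of elements of minimal length in their coset `D_Y a`. The supports of
the cocycles show that every `g` factors uniquely as `h a` with `h ∈ D_Y`, `a ∈ A_Y`, and lengths
add (`len_mul_minRep`, `minRep_unique`). Hence `𝒢_D = 𝒢_{D_Y} · 𝒢_{A_Y}`, that is,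
`𝒢_{D_Y}⁻¹ = 𝒢_{A_Y} · 𝒢_D⁻¹`. Moreover `g ∈ A_Y` exactly when `coc g` vanishes at every generator
in `Y` (`mem_minRep_iff`).

*Inclusion–exclusion.* For fixed `g`, the sum of `(-1)^|Y|` over the `Y` with `g ∈ A_Y` runs over
all subsets of the set of generators that are not left descents of `g`, so it is zero unless all
generators are left descents of `g`. Such a `g` exists only in spherical type
(`spherical_of_descents`). Indeed, if `x` and `y` are not adjacent, `D` maps to an amalgamated product
of `D_{V ∖ x}` and `D_{V ∖ y}` over `D_{V ∖ {x, y}}`, and the normal form theorem there shows that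
no element of `D_{x,y}` has both `x` and `y` as left descents; this uses that generators of equal
order are distinct elements, seen in the geometric representation of the Coxeter group `D_2` and in
cyclic quotients. And if all generators are left descents of `g`, every element of `D_2` is a prefix
of `g`, so `D_2` is finite. Outside spherical type one concludes `∑_Y (-1)^|Y| 𝒢_{A_Y} = 0`; multiplying
by `𝒢_D⁻¹` and moving the term `Y = V` to the other side gives the theorem.
-/

open scoped Classical

/-- The word length of `g` with respect to the alphabet `S ∪ S⁻¹`. -/
noncomputable def wordLength {G : Type*} [Group G] (S : Set G) (g : G) : ℕ :=
  sInf {n | ∃ w : List G, w.length = n ∧ (∀ a ∈ w, a ∈ S ∪ S⁻¹) ∧ w.prod = g}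

/-- The syllable length of `g` with respect to `S`. -/
noncomputable def sylLength {G : Type*} [Group G] (S : Set G) (g : G) : ℕ :=
  sInf {n | ∃ w : List (G × ℤ), w.length = n ∧ (∀ p ∈ w, p.1 ∈ S) ∧
    (w.map fun p => p.1 ^ p.2).prod = g}

/-- The growth series of a subset `A` of a group `G` with respect to a generating set `S`:
the coefficient of `t^n` is the number of elements of `A` of word length `n`. -/
noncomputable def growthSeries {G : Type*} [Group G] (S : Set G) (A : Set G) :
    PowerSeries ℤ :=
  PowerSeries.mk fun n => (Set.ncard {g ∈ A | wordLength S g = n} : ℤ)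

/-- A Dyer graph. -/
structure DyerGraph (V : Type*) where
  Adj : V → V → Prop
  symm : ∀ {x y}, Adj x y → Adj y x
  loopless : ∀ x, ¬ Adj x x
  m : V → V → ℕ
  m_symm : ∀ x y, m x y = m y x
  m_ge : ∀ {x y}, Adj x y → 2 ≤ m x y
  f : V → ℕ∞
  f_ge : ∀ x, 2 ≤ f x
  compat : ∀ {x y}, Adj x y → m x y ≠ 2 → f x = 2 ∧ f y = 2

namespace DyerGraph

variable {V : Type*} (Γ : DyerGraph V)

/-- The alternating word `π(x, y, n) = xyxy⋯` of length `n` in the free group. -/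
def altWord (x y : V) : ℕ → FreeGroup V
  | 0 => 1
  | n + 1 => FreeGroup.of x * altWord y x n

/-- The defining relations of the Dyer group. -/
def rels : Set (FreeGroup V) :=
  {r | ∃ x : V, Γ.f x ≠ ⊤ ∧ r = FreeGroup.of x ^ (Γ.f x).toNat} ∪
  {r | ∃ x y : V, Γ.Adj x y ∧
      r = altWord x y (Γ.m x y) * (altWord y x (Γ.m x y))⁻¹}

/-- The Dyer group associated to a Dyer graph. -/
abbrev DyerGroup := PresentedGroup Γ.rels

/-- The standard generator of the Dyer group corresponding to a vertex. -/
def gen (x : V) : Γ.DyerGroup := PresentedGroup.of x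

/-- The standard parabolic subgroup generated by `X ⊆ V`. -/
def parabolic (X : Set V) : Subgroup Γ.DyerGroup := Subgroup.closure (Γ.gen '' X)

/-- The set of vertices with `f x = 2`. -/
def V2 : Set V := {x | Γ.f x = 2}

/-- The set of vertices with `2 < f x < ∞`. -/
def Vp : Set V := {x | 2 < Γ.f x ∧ Γ.f x ≠ ⊤}

/-- The set of vertices with `f x = ∞`. -/
def Vinf : Set V := {x | Γ.f x = ⊤}

/-- A Dyer group is of spherical type if the graph is complete and `D_2` is finite. -/
def Spherical : Prop :=
  (∀ x y : V, x ≠ y → Γ.Adj x y) ∧ (Γ.parabolic Γ.V2 : Set Γ.DyerGroup).Finite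

/-- The set `A_X` of `X`-minimal elements. -/
def Amin (X : Set V) : Set Γ.DyerGroup :=
  {g | ∀ h ∈ Γ.parabolic X,
    sylLength (Set.range Γ.gen) g ≤ sylLength (Set.range Γ.gen) (g * h)}

/-- The set `B_X = A_X ∖ ⋃_{X ⊊ Y} A_Y`. -/
def Bmin (X : Set V) : Set Γ.DyerGroup :=
  Γ.Amin X \ ⋃ (Y : Set V) (_ : X ⊂ Y), Γ.Amin Y

end DyerGraph

namespace DyerGraph

/-! ### Homomorphisms out of a Dyer group -/

/-- The alternating product `abab⋯` of `n` factors in an arbitrary monoid. -/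
def alt {G : Type*} [Monoid G] (a b : G) : ℕ → G
  | 0 => 1
  | n + 1 => a * alt b a n

lemma map_alt {G H : Type*} [Monoid G] [Monoid H] (φ : G →* H) (n : ℕ) :
    ∀ a b : G, φ (alt a b n) = alt (φ a) (φ b) n := by
  induction n with
  | zero => intro a b; simp [alt]
  | succ n ih => intro a b; simp [alt, ih]

lemma alt_two {G : Type*} [Monoid G] (a b : G) : alt a b 2 = a * b := by simp [alt]

/-- For involutions, the braid relation of length `n` is the relation `(ab)ⁿ = 1`. -/
lemma alt_mul_inv_alt {G : Type*} [Group G] (n : ℕ) :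
    ∀ a b : G, a * a = 1 → b * b = 1 → alt a b n * (alt b a n)⁻¹ = (a * b) ^ n := by
  induction n with
  | zero => intro a b _ _; simp [alt]
  | succ n ih =>
    intro a b ha hb
    have hb' : b⁻¹ = b := inv_eq_of_mul_eq_one_left hb
    have h1 : a * (b * a) ^ n = (a * b) ^ n * a :=
      (show SemiconjBy a (b * a) (a * b) by simp [SemiconjBy, mul_assoc]).pow_right n
    calc alt a b (n + 1) * (alt b a (n + 1))⁻¹
        = a * (alt b a n * (alt a b n)⁻¹) * b⁻¹ := by simp [alt, mul_assoc]
      _ = (a * b) ^ (n + 1) := by rw [ih b a hb ha, h1, hb', pow_succ, mul_assoc]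

variable {V : Type*} (Γ : DyerGraph V)

lemma lift_altWord {G : Type*} [Group G] (ρ : V → G) (n : ℕ) :
    ∀ x y : V, FreeGroup.lift ρ (altWord x y n) = alt (ρ x) (ρ y) n := by
  induction n with
  | zero => intro x y; simp [alt, altWord]
  | succ n ih => intro x y; simp [alt, altWord, ih]

/-- The order `f x` of the generator `x`, with `0` standing for `∞`, so that the powers of `x`
are parametrised by `ZMod (ord x)` in all cases. -/
def ord (x : V) : ℕ := (Γ.f x).toNat

lemma ord_eq_two {x : V} (h : Γ.f x = 2) : Γ.ord x = 2 := by
  simp [ord, h]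

lemma f_eq_two {x : V} (h : Γ.ord x = 2) : Γ.f x = 2 := by
  unfold ord at h
  cases hx : Γ.f x with
  | top => simp [hx] at h
  | coe n => simp [hx] at h; simp [h]

lemma ord_ne_one (x : V) : Γ.ord x ≠ 1 := by
  intro h
  unfold ord at h
  have h2 := Γ.f_ge x
  cases hx : Γ.f x with
  | top => simp [hx] at h
  | coe n => simp [hx] at h; rw [hx, h] at h2; exact absurd h2 (by decide)

lemma gen_pow_ord (x : V) : Γ.gen x ^ Γ.ord x = 1 := by
  by_cases hx : Γ.f x = ⊤
  · simp [ord, hx]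
  · exact PresentedGroup.one_of_mem (rels := Γ.rels) (x := FreeGroup.of x ^ (Γ.f x).toNat)
      (Or.inl ⟨x, hx, rfl⟩)

lemma lift_gen_eq_mk (w : FreeGroup V) : FreeGroup.lift Γ.gen w = PresentedGroup.mk Γ.rels w := by
  have : FreeGroup.lift Γ.gen = PresentedGroup.mk Γ.rels := by
    ext x; simp [gen, PresentedGroup.of]
  rw [this]

lemma gen_alt {x y : V} (h : Γ.Adj x y) :
    alt (Γ.gen x) (Γ.gen y) (Γ.m x y) = alt (Γ.gen y) (Γ.gen x) (Γ.m x y) := by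
  rw [← lift_altWord, ← lift_altWord, lift_gen_eq_mk, lift_gen_eq_mk]
  exact PresentedGroup.mk_eq_mk_of_mul_inv_mem (Or.inr ⟨x, y, h, rfl⟩)

/-- The universal property of the Dyer group. -/
def homOfGen {G : Type*} [Group G] (ρ : V → G) (h1 : ∀ x, ρ x ^ Γ.ord x = 1)
    (h2 : ∀ x y, Γ.Adj x y → alt (ρ x) (ρ y) (Γ.m x y) = alt (ρ y) (ρ x) (Γ.m x y)) :
    Γ.DyerGroup →* G :=
  PresentedGroup.toGroup (f := ρ) (by
    rintro r (⟨x, _, rfl⟩ | ⟨x, y, hxy, rfl⟩)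
    · simpa [ord] using h1 x
    · rw [map_mul, map_inv, lift_altWord, lift_altWord, h2 x y hxy, mul_inv_cancel])

@[simp] lemma homOfGen_gen {G : Type*} [Group G] (ρ : V → G) (h1 h2) (x : V) :
    Γ.homOfGen ρ h1 h2 (Γ.gen x) = ρ x :=
  PresentedGroup.toGroup.of _

/-- It suffices to check a braid relation as a commutation when `m = 2`, and as `(ab)ᵐ = 1` when
both generators are involutions. -/
lemma alt_eq_of {G : Type*} [Group G] (ρ : V → G) (h1 : ∀ x, ρ x ^ Γ.ord x = 1)
    {x y : V} (h : Γ.Adj x y) (hc : Γ.m x y = 2 → ρ x * ρ y = ρ y * ρ x)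
    (hb : Γ.f x = 2 → Γ.f y = 2 → (ρ x * ρ y) ^ Γ.m x y = 1) :
    alt (ρ x) (ρ y) (Γ.m x y) = alt (ρ y) (ρ x) (Γ.m x y) := by
  by_cases hm : Γ.m x y = 2
  · rw [hm, alt_two, alt_two, hc hm]
  · obtain ⟨hx, hy⟩ := Γ.compat h hm
    have hx1 := h1 x
    have hy1 := h1 y
    rw [Γ.ord_eq_two hx, pow_two] at hx1
    rw [Γ.ord_eq_two hy, pow_two] at hy1
    rw [← mul_inv_eq_one, alt_mul_inv_alt _ _ _ hx1 hy1, hb hx hy]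

lemma gen_comm {x y : V} (h : Γ.Adj x y) (hm : Γ.m x y = 2) :
    Γ.gen x * Γ.gen y = Γ.gen y * Γ.gen x := by
  have := Γ.gen_alt h
  rwa [hm, alt_two, alt_two] at this

lemma gen_mul_self {x : V} (hx : Γ.f x = 2) : Γ.gen x * Γ.gen x = 1 := by
  have := Γ.gen_pow_ord x
  rwa [Γ.ord_eq_two hx, pow_two] at this

lemma gen_mul_gen_pow {x y : V} (h : Γ.Adj x y) (hx : Γ.f x = 2) (hy : Γ.f y = 2) :
    (Γ.gen x * Γ.gen y) ^ Γ.m x y = 1 := by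
  rw [← alt_mul_inv_alt _ _ _ (Γ.gen_mul_self hx) (Γ.gen_mul_self hy), Γ.gen_alt h,
    mul_inv_cancel]

/-! ### The reflection cocycle -/

/-- The module in which the cocycle takes its values: an integer modulo `k` for every element `r`
of the group and every `k`. Only the conjugates `r` of a generator `x` and `k = ord x` matter. -/
abbrev Mod : Type _ := ∀ i : Γ.DyerGroup × ℕ, ZMod i.2

/-- The conjugation action of the group on `Mod`. -/
def act (g : Γ.DyerGroup) (F : Γ.Mod) : Γ.Mod := fun i => F (g⁻¹ * i.1 * g, i.2)

/-- The element of `Mod` with value `n` at `(r, k)` and `0` elsewhere. -/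
noncomputable def sgl (r : Γ.DyerGroup) (k : ℕ) (n : ℤ) : Γ.Mod :=
  fun i => if i.1 = r ∧ i.2 = k then (n : ZMod i.2) else 0

variable {Γ}

@[simp] lemma act_apply (g : Γ.DyerGroup) (F : Γ.Mod) (i) :
    Γ.act g F i = F (g⁻¹ * i.1 * g, i.2) := rfl

lemma act_one (F : Γ.Mod) : Γ.act 1 F = F := by
  funext ⟨r, k⟩
  have : (1 : Γ.DyerGroup)⁻¹ * r * 1 = r := by group
  change F ((1 : Γ.DyerGroup)⁻¹ * r * 1, k) = F (r, k)
  rw [this]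

lemma act_mul (g h : Γ.DyerGroup) (F : Γ.Mod) : Γ.act (g * h) F = Γ.act g (Γ.act h F) := by
  funext ⟨r, k⟩
  have : (g * h)⁻¹ * r * (g * h) = h⁻¹ * (g⁻¹ * r * g) * h := by group
  change F ((g * h)⁻¹ * r * (g * h), k) = F (h⁻¹ * (g⁻¹ * r * g) * h, k)
  rw [this]

lemma act_add (g : Γ.DyerGroup) (F F' : Γ.Mod) :
    Γ.act g (F + F') = Γ.act g F + Γ.act g F' := rfl

lemma act_zero (g : Γ.DyerGroup) : Γ.act g (0 : Γ.Mod) = 0 := rfl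

lemma act_sgl (g r : Γ.DyerGroup) (k : ℕ) (n : ℤ) :
    Γ.act g (Γ.sgl r k n) = Γ.sgl (g * r * g⁻¹) k n := by
  funext i
  have : g⁻¹ * i.1 * g = r ↔ i.1 = g * r * g⁻¹ := by
    constructor
    · rintro rfl; group
    · intro h; rw [h]; group
  simp [sgl, this]

lemma sgl_add (r : Γ.DyerGroup) (k : ℕ) (n m : ℤ) :
    Γ.sgl r k (n + m) = Γ.sgl r k n + Γ.sgl r k m := by
  funext i
  by_cases h : i.1 = r ∧ i.2 = k <;> simp [sgl, h]

lemma sgl_eq_zero (r : Γ.DyerGroup) (k : ℕ) (n : ℤ) (h : (n : ZMod k) = 0) :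
    Γ.sgl r k n = 0 := by
  funext i
  obtain ⟨a, b⟩ := i
  by_cases hi : a = r ∧ b = k
  · obtain ⟨rfl, rfl⟩ := hi; simp [sgl, h]
  · simp [sgl, hi]

/-- The affine transformation `F ↦ g·F + a` of `Mod`. -/
def aff (g : Γ.DyerGroup) (a : Γ.Mod) : Equiv.Perm Γ.Mod where
  toFun F := Γ.act g F + a
  invFun F := Γ.act g⁻¹ (F - a)
  left_inv F := by
    change Γ.act g⁻¹ (Γ.act g F + a - a) = F
    rw [add_sub_cancel_right, ← act_mul, inv_mul_cancel, act_one]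
  right_inv F := by
    change Γ.act g (Γ.act g⁻¹ (F - a)) + a = F
    rw [← act_mul, mul_inv_cancel, act_one, sub_add_cancel]

lemma aff_mul (g h : Γ.DyerGroup) (a b : Γ.Mod) :
    aff g a * aff h b = aff (g * h) (Γ.act g b + a) := by
  ext1 F
  change Γ.act g (Γ.act h F + b) + a = Γ.act (g * h) F + (Γ.act g b + a)
  rw [act_add, act_mul, add_assoc]

lemma aff_one : aff (1 : Γ.DyerGroup) 0 = 1 := by
  ext1 F
  change Γ.act 1 F + 0 = F
  rw [act_one, add_zero]

lemma aff_pow (g : Γ.DyerGroup) (a : Γ.Mod) (n : ℕ) :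
    aff g a ^ n = aff (g ^ n) (∑ i ∈ Finset.range n, Γ.act (g ^ i) a) := by
  induction n with
  | zero => simp [aff_one]
  | succ n ih => rw [pow_succ, ih, aff_mul, ← pow_succ, Finset.sum_range_succ,
      add_comm (Γ.act _ _)]

variable (Γ) in
/-- The affine transformation attached to the generator `x`. -/
noncomputable def affGen (x : V) : Equiv.Perm Γ.Mod := aff (Γ.gen x) (Γ.sgl (Γ.gen x) (Γ.ord x) 1)

lemma affGen_pow (x : V) (n : ℕ) :
    Γ.affGen x ^ n = aff (Γ.gen x ^ n) (Γ.sgl (Γ.gen x) (Γ.ord x) n) := by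
  rw [affGen, aff_pow]
  congr 1
  induction n with
  | zero => rw [Finset.sum_range_zero, sgl_eq_zero]; simp
  | succ n ih =>
    rw [Finset.sum_range_succ, ih, act_sgl, Nat.cast_succ, sgl_add,
      ← pow_succ, pow_succ', mul_inv_cancel_right]

lemma affGen_pow_ord (x : V) : Γ.affGen x ^ Γ.ord x = 1 := by
  rw [affGen_pow, gen_pow_ord, sgl_eq_zero, aff_one]
  simp

lemma affGen_comm {x y : V} (h : Γ.Adj x y) (hm : Γ.m x y = 2) :
    Γ.affGen x * Γ.affGen y = Γ.affGen y * Γ.affGen x := by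
  have hc := Γ.gen_comm h hm
  rw [affGen, affGen, aff_mul, aff_mul, act_sgl, act_sgl, hc, mul_inv_cancel_right, ← hc,
    mul_inv_cancel_right, add_comm]

/-- In the dihedral group generated by `x` and `y`, the element `(xy)ᵐ` accumulates the reflections
`(xy)ʲx` for `j < 2m`; these run twice through the same list, so their sum vanishes modulo `2`. -/
lemma affGen_mul_pow {x y : V} (h : Γ.Adj x y) (hx : Γ.f x = 2) (hy : Γ.f y = 2) :
    (Γ.affGen x * Γ.affGen y) ^ Γ.m x y = 1 := by
  have hpow := Γ.gen_mul_gen_pow h hx hy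
  have hxx := Γ.gen_mul_self hx
  have hyy := Γ.gen_mul_self hy
  rw [affGen, affGen, aff_mul, aff_pow, Γ.ord_eq_two hx, Γ.ord_eq_two hy, hpow]
  set a := Γ.gen x
  set b := Γ.gen y
  have ha' : a⁻¹ = a := inv_eq_of_mul_eq_one_left hxx
  have hb' : b⁻¹ = b := inv_eq_of_mul_eq_one_left hyy
  have hsc : ∀ i : ℕ, a * ((a * b) ^ i)⁻¹ = (a * b) ^ i * a := by
    intro i
    rw [← inv_pow]
    exact (show SemiconjBy a (a * b)⁻¹ (a * b) by
      simp [SemiconjBy, ha', hb', mul_assoc]).pow_right i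
  have h1 : ∀ i : ℕ, (a * b) ^ i * a * ((a * b) ^ i)⁻¹ = (a * b) ^ (2 * i) * a := by
    intro i
    rw [mul_assoc, hsc, ← mul_assoc, ← pow_add, two_mul]
  have h2 : ∀ i : ℕ, (a * b) ^ i * (a * b * a⁻¹) * ((a * b) ^ i)⁻¹
      = (a * b) ^ (2 * i + 1) * a := by
    intro i
    rw [ha', mul_assoc, mul_assoc (a * b), hsc, ← mul_assoc, ← mul_assoc, ← pow_succ, ← pow_add]
    congr 2; omega
  have h3 : ∀ n : ℕ, (∑ i ∈ Finset.range n,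
      Γ.act ((a * b) ^ i) (Γ.act a (Γ.sgl b 2 1) + Γ.sgl a 2 1)) =
      ∑ j ∈ Finset.range (n + n), Γ.sgl ((a * b) ^ j * a) 2 1 := by
    intro n
    induction n with
    | zero => simp
    | succ n ih =>
      rw [Finset.sum_range_succ, ih, show n + 1 + (n + 1) = 2 * n + 1 + 1 by omega,
        Finset.sum_range_succ, Finset.sum_range_succ, act_add, act_sgl, act_sgl, act_sgl, h1, h2,
        add_assoc, two_mul, add_comm (Γ.sgl _ _ _)]
  rw [h3, Finset.sum_range_add]
  simp only [pow_add, hpow, one_mul]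
  rw [← Finset.sum_add_distrib, Finset.sum_eq_zero, aff_one]
  intro j _
  rw [← sgl_add, sgl_eq_zero]
  decide

variable (Γ) in
/-- The affine action of the Dyer group on `Mod`. -/
noncomputable def affHom : Γ.DyerGroup →* Equiv.Perm Γ.Mod :=
  Γ.homOfGen Γ.affGen affGen_pow_ord fun _ _ h =>
    Γ.alt_eq_of _ affGen_pow_ord h (affGen_comm h) (affGen_mul_pow h)

variable (Γ) in
/-- The reflection cocycle: the translation part of the affine action. -/
noncomputable def coc (g : Γ.DyerGroup) : Γ.Mod := Γ.affHom g 0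

lemma parabolic_univ : Γ.parabolic Set.univ = ⊤ := by
  rw [parabolic, Set.image_univ]
  exact PresentedGroup.closure_range_of _

/-- The linear part of the affine action is the conjugation action. -/
lemma affHom_eq (g : Γ.DyerGroup) : Γ.affHom g = aff g (Γ.coc g) := by
  have key : ∃ a, Γ.affHom g = aff g a := by
    have hg : g ∈ Γ.parabolic Set.univ := by rw [parabolic_univ]; trivial
    induction hg using Subgroup.closure_induction with
    | mem _ h => obtain ⟨x, _, rfl⟩ := h; exact ⟨_, by rw [affHom, homOfGen_gen]; rfl⟩
    | one => exact ⟨0, by rw [map_one, aff_one]⟩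
    | mul g h _ _ hg hh =>
      obtain ⟨a, ha⟩ := hg; obtain ⟨b, hb⟩ := hh
      exact ⟨_, by rw [map_mul, ha, hb, aff_mul]⟩
    | inv g _ hg =>
      obtain ⟨a, ha⟩ := hg
      refine ⟨-Γ.act g⁻¹ a, ?_⟩
      rw [map_inv, ha, inv_eq_iff_mul_eq_one, aff_mul, mul_inv_cancel]
      convert aff_one
      have : Γ.act g (-Γ.act g⁻¹ a) = -Γ.act g (Γ.act g⁻¹ a) := rfl
      rw [this, ← act_mul, mul_inv_cancel, act_one, neg_add_cancel]
  obtain ⟨a, ha⟩ := key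
  have : Γ.coc g = a := by
    rw [coc, ha]
    change Γ.act g 0 + a = a
    rw [act_zero, zero_add]
  rw [this, ha]

lemma coc_mul (g h : Γ.DyerGroup) : Γ.coc (g * h) = Γ.coc g + Γ.act g (Γ.coc h) := by
  have : Γ.coc (g * h) = Γ.affHom g (Γ.affHom h 0) := by rw [coc, map_mul]; rfl
  rw [this, affHom_eq g, add_comm]
  rfl

lemma coc_one : Γ.coc 1 = 0 := by
  rw [coc, map_one]; rfl

lemma coc_gen_pow (x : V) (n : ℕ) : Γ.coc (Γ.gen x ^ n) = Γ.sgl (Γ.gen x) (Γ.ord x) n := by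
  rw [coc, map_pow, affHom, homOfGen_gen, affGen_pow]
  change Γ.act _ 0 + _ = _
  rw [act_zero, zero_add]

lemma coc_gen_zpow (x : V) (n : ℤ) : Γ.coc (Γ.gen x ^ n) = Γ.sgl (Γ.gen x) (Γ.ord x) n := by
  obtain ⟨n, rfl | rfl⟩ := n.eq_nat_or_neg
  · rw [zpow_natCast, coc_gen_pow]
  · have h := coc_mul (Γ.gen x ^ (-(n : ℤ))) (Γ.gen x ^ (n : ℤ))
    rw [← zpow_add, neg_add_cancel, zpow_zero, coc_one, zpow_natCast, coc_gen_pow, act_sgl,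
      ← zpow_add_one, add_comm (-(n : ℤ)) 1, zpow_one_add, mul_inv_cancel_right, add_comm] at h
    have h2 : Γ.sgl (Γ.gen x) (Γ.ord x) (n : ℤ) + Γ.sgl (Γ.gen x) (Γ.ord x) (-n) = 0 := by
      rw [← sgl_add, sgl_eq_zero]; simp
    exact add_left_cancel (h.symm.trans h2.symm)

end DyerGraph

namespace DyerGraph

variable {V : Type*} {Γ : DyerGraph V}

/-! ### The norm of the cocycle -/

/-- The word length of `c` in the cyclic group `ZMod k` generated by `1`. -/
def wt {k : ℕ} (c : ZMod k) : ℕ := c.valMinAbs.natAbs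

lemma wt_zero {k : ℕ} : wt (0 : ZMod k) = 0 := by simp [wt]

lemma wt_eq_zero {k : ℕ} {c : ZMod k} : wt c = 0 ↔ c = 0 := by simp [wt]

lemma wt_add_le {k : ℕ} (a b : ZMod k) : wt (a + b) ≤ wt a + wt b :=
  (ZMod.natAbs_valMinAbs_add_le a b).trans (Int.natAbs_add_le _ _)

lemma wt_neg {k : ℕ} (a : ZMod k) : wt (-a) = wt a := ZMod.natAbs_valMinAbs_neg a

lemma wt_one_le {k : ℕ} : wt (1 : ZMod k) ≤ 1 := by
  rcases k with _ | k
  · exact le_of_eq rfl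
  · have := (1 : ZMod (k + 1)).valMinAbs_natAbs_eq_min
    unfold wt
    rw [this]
    refine (min_le_left _ _).trans ?_
    have := ZMod.val_natCast (k + 1) 1
    rw [Nat.cast_one] at this
    rw [this]
    exact Nat.mod_le _ _

/-- The total weight of an element of `Mod`. Values in `ℝ≥0∞` make summability automatic. -/
noncomputable def nrm (F : Γ.Mod) : ENNReal := ∑' i, (wt (F i) : ENNReal)

lemma nrm_zero : nrm (0 : Γ.Mod) = 0 := by simp [nrm, wt_zero]

lemma nrm_add_le (F F' : Γ.Mod) : nrm (F + F') ≤ nrm F + nrm F' := by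
  unfold nrm
  rw [← ENNReal.tsum_add]
  refine ENNReal.tsum_le_tsum fun i => ?_
  exact_mod_cast wt_add_le (F i) (F' i)

lemma nrm_add_of_disjoint (F F' : Γ.Mod) (h : ∀ i, F i = 0 ∨ F' i = 0) :
    nrm (F + F') = nrm F + nrm F' := by
  unfold nrm
  rw [← ENNReal.tsum_add]
  refine tsum_congr fun i => ?_
  rcases h i with h | h <;> simp [h, wt_zero]

lemma nrm_act (g : Γ.DyerGroup) (F : Γ.Mod) : nrm (Γ.act g F) = nrm F := by
  let e : Γ.DyerGroup × ℕ ≃ Γ.DyerGroup × ℕ :=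
    ((MulAut.conj g⁻¹).toEquiv).prodCongr (Equiv.refl ℕ)
  have := e.tsum_eq (fun i => (wt (F i) : ENNReal))
  unfold nrm
  rw [← this]
  refine tsum_congr fun i => ?_
  have : e i = (g⁻¹ * i.1 * g, i.2) := by
    rw [show e i = (MulAut.conj g⁻¹ i.1, i.2) from rfl, MulAut.conj_apply, inv_inv]
  have h2 : ∀ j : Γ.DyerGroup × ℕ, j = (g⁻¹ * i.1 * g, i.2) → wt (F j) = wt (Γ.act g F i) := by
    rintro j rfl; rfl
  rw [h2 _ this]

lemma sgl_self (r : Γ.DyerGroup) (k : ℕ) (n : ℤ) : Γ.sgl r k n (r, k) = n := by simp [sgl]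

lemma sgl_of_ne {r r' : Γ.DyerGroup} {k k' : ℕ} (n : ℤ) (h : ¬ (r' = r ∧ k' = k)) :
    Γ.sgl r k n (r', k') = 0 := by simp [sgl, h]

lemma nrm_sgl (r : Γ.DyerGroup) (k : ℕ) (n : ℤ) : nrm (Γ.sgl r k n) = wt (n : ZMod k) := by
  unfold nrm
  rw [tsum_eq_single (r, k), sgl_self]
  rintro ⟨r', k'⟩ h
  rw [sgl_of_ne, wt_zero, Nat.cast_zero]
  simpa using h

/-! ### Syllabic words -/

/-- The element of the Dyer group represented by a list of syllables `xⁿ`. -/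
def ev (w : List (V × ℤ)) : Γ.DyerGroup := (w.map fun p => Γ.gen p.1 ^ p.2).prod

lemma ev_nil : (ev [] : Γ.DyerGroup) = 1 := rfl

lemma ev_cons (x : V) (n : ℤ) (w : List (V × ℤ)) :
    (ev ((x, n) :: w) : Γ.DyerGroup) = Γ.gen x ^ n * ev w := by simp [ev]

lemma ev_append (w w' : List (V × ℤ)) : (ev (w ++ w') : Γ.DyerGroup) = ev w * ev w' := by
  simp [ev]

/-- The formal inverse of a syllabic word. -/
def invw (w : List (V × ℤ)) : List (V × ℤ) := (w.map fun p => (p.1, -p.2)).reverse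

lemma ev_invw (w : List (V × ℤ)) : (ev (invw w) : Γ.DyerGroup) = (ev w)⁻¹ := by
  induction w with
  | nil => simp [invw, ev]
  | cons p w ih =>
    obtain ⟨x, n⟩ := p
    have : invw ((x, n) :: w) = invw w ++ [(x, -n)] := by simp [invw]
    rw [this, ev_append, ih, ev_cons, ev_cons, ev_nil, mul_one, mul_inv_rev, zpow_neg]

/-- The word `w` uses only the letters in `X`. -/
def Over (X : Set V) (w : List (V × ℤ)) : Prop := ∀ p ∈ w, p.1 ∈ X

lemma over_nil (X : Set V) : Over X [] := by simp [Over]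

lemma over_cons {X : Set V} {x : V} {n : ℤ} {w : List (V × ℤ)} :
    Over X ((x, n) :: w) ↔ x ∈ X ∧ Over X w := by simp [Over]

lemma gen_mem {X : Set V} {x : V} (hx : x ∈ X) : Γ.gen x ∈ Γ.parabolic X :=
  Subgroup.subset_closure ⟨x, hx, rfl⟩

lemma ev_mem {X : Set V} {w : List (V × ℤ)} (h : Over X w) : ev w ∈ Γ.parabolic X := by
  induction w with
  | nil => exact one_mem _
  | cons p w ih =>
    obtain ⟨x, n⟩ := p
    rw [over_cons] at h
    rw [ev_cons]
    exact mul_mem (zpow_mem (gen_mem h.1) n) (ih h.2)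

lemma exists_ev {X : Set V} {g : Γ.DyerGroup} (hg : g ∈ Γ.parabolic X) :
    ∃ w, Over X w ∧ ev w = g := by
  induction hg using Subgroup.closure_induction with
  | mem _ h =>
    obtain ⟨x, hx, rfl⟩ := h
    exact ⟨[(x, 1)], over_cons.2 ⟨hx, over_nil X⟩, by simp [ev]⟩
  | one => exact ⟨[], over_nil X, ev_nil⟩
  | mul g h _ _ hg hh =>
    obtain ⟨w, h1, rfl⟩ := hg
    obtain ⟨w', h2, rfl⟩ := hh
    refine ⟨w ++ w', fun p hp => ?_, ev_append w w'⟩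
    rcases List.mem_append.1 hp with hp | hp
    exacts [h1 p hp, h2 p hp]
  | inv g _ hg =>
    obtain ⟨w, h1, rfl⟩ := hg
    refine ⟨invw w, fun p hp => ?_, ev_invw w⟩
    simp only [invw, List.mem_reverse, List.mem_map] at hp
    obtain ⟨q, hq, rfl⟩ := hp
    exact h1 q hq

/-- The total weight of the syllables of a word. -/
def wtw (Γ : DyerGraph V) : List (V × ℤ) → ℕ
  | [] => 0
  | (x, n) :: w => wt (n : ZMod (Γ.ord x)) + wtw Γ w

/-- A word is reduced if its syllables are nontrivial and each of them contributes to the cocycle at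
a reflection at which the remaining word contributes nothing. -/
def Red (Γ : DyerGraph V) : List (V × ℤ) → Prop
  | [] => True
  | (x, n) :: w => (n : ZMod (Γ.ord x)) ≠ 0 ∧ Γ.coc (ev w) (Γ.gen x, Γ.ord x) = 0 ∧ Red Γ w

lemma coc_cons (x : V) (n : ℤ) (w : List (V × ℤ)) (r : Γ.DyerGroup) (k : ℕ) :
    Γ.coc (ev ((x, n) :: w)) (r, k) = Γ.sgl (Γ.gen x) (Γ.ord x) n (r, k) +
      Γ.coc (ev w) ((Γ.gen x ^ n)⁻¹ * r * Γ.gen x ^ n, k) := by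
  rw [ev_cons, coc_mul, coc_gen_zpow]
  rfl

lemma coc_cons_self (x : V) (n : ℤ) (w : List (V × ℤ)) :
    Γ.coc (ev ((x, n) :: w)) (Γ.gen x, Γ.ord x) = n + Γ.coc (ev w) (Γ.gen x, Γ.ord x) := by
  have h : (Γ.gen x ^ n)⁻¹ * Γ.gen x * Γ.gen x ^ n = Γ.gen x := by group
  rw [coc_cons, sgl_self, h]

lemma coc_cons_self_ne {x : V} {n : ℤ} {w : List (V × ℤ)} (h : Red Γ ((x, n) :: w)) :
    Γ.coc (ev ((x, n) :: w)) (Γ.gen x, Γ.ord x) ≠ 0 := by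
  rw [coc_cons_self, h.2.1, add_zero]
  exact h.1

/-- If the cocycle of a word is nonzero at `r`, then either `r` is the generator in its first
syllable, or the cocycle of the remaining word is nonzero at a conjugate of `r`. -/
lemma coc_cons_ne {x : V} {n : ℤ} {w : List (V × ℤ)} {r : Γ.DyerGroup} {k : ℕ}
    (h : Γ.coc (ev ((x, n) :: w)) (r, k) ≠ 0) :
    r = Γ.gen x ∨ Γ.coc (ev w) ((Γ.gen x ^ n)⁻¹ * r * Γ.gen x ^ n, k) ≠ 0 := by
  by_contra! hc
  rw [coc_cons, hc.2, add_zero, sgl_of_ne] at h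
  · exact h rfl
  · exact fun h => hc.1 h.1

/-- The cocycle of an element of a parabolic subgroup is supported in that subgroup. -/
lemma mem_of_coc_ne {X : Set V} {w : List (V × ℤ)} (hw : Over X w) :
    ∀ {r : Γ.DyerGroup} {k : ℕ}, Γ.coc (ev w) (r, k) ≠ 0 → r ∈ Γ.parabolic X := by
  induction w with
  | nil => intro r k h; rw [ev_nil, coc_one] at h; exact absurd rfl h
  | cons p w ih =>
    obtain ⟨x, n⟩ := p
    intro r k h
    rw [over_cons] at hw
    have hx := gen_mem (Γ := Γ) hw.1
    rcases coc_cons_ne h with rfl | h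
    · exact hx
    · have := ih hw.2 h
      have h2 := mul_mem (mul_mem (zpow_mem hx n) this) (inv_mem (zpow_mem hx n))
      convert h2 using 1
      group

/-- Exchange: left multiplication by a power of a reflection in the support of the cocycle amounts
to changing the exponent of one syllable. -/
lemma exists_exchange {X : Set V} {w : List (V × ℤ)} (hw : Over X w) (c : ℤ) :
    ∀ {r : Γ.DyerGroup} {k : ℕ}, Γ.coc (ev w) (r, k) ≠ 0 →
      ∃ w', Over X w' ∧ w'.length = w.length ∧ ev w' = r ^ c * ev w := by
  induction w with
  | nil => intro r k h; rw [ev_nil, coc_one] at h; exact absurd rfl h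
  | cons p w ih =>
    obtain ⟨x, n⟩ := p
    intro r k h
    rw [over_cons] at hw
    rcases coc_cons_ne h with rfl | h
    · exact ⟨(x, c + n) :: w, over_cons.2 hw, rfl, by rw [ev_cons, ev_cons, zpow_add, mul_assoc]⟩
    · obtain ⟨w', h1, h2, h3⟩ := ih hw.2 h
      refine ⟨(x, n) :: w', over_cons.2 ⟨hw.1, h1⟩, by simp [h2], ?_⟩
      have := conj_zpow (i := c) (a := (Γ.gen x ^ n)⁻¹) (b := r)
      rw [inv_inv] at this
      rw [ev_cons, h3, this, ev_cons]
      group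

/-- Deletion: for a reduced word, a suitable power of a reflection in the support of the cocycle
removes one syllable, and hence lowers the weight. -/
lemma exists_deletion {w : List (V × ℤ)} (hw : Red Γ w) :
    ∀ {r : Γ.DyerGroup} {k : ℕ}, Γ.coc (ev w) (r, k) ≠ 0 →
      ∃ (w' : List (V × ℤ)) (c : ℤ), wtw Γ w' < wtw Γ w ∧ ev w' = r ^ c * ev w := by
  induction w with
  | nil => intro r k h; rw [ev_nil, coc_one] at h; exact absurd rfl h
  | cons p w ih =>
    obtain ⟨x, n⟩ := p
    intro r k h
    rcases coc_cons_ne h with rfl | h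
    · refine ⟨w, -n, ?_, by rw [ev_cons, zpow_neg, inv_mul_cancel_left]⟩
      have : wt (n : ZMod (Γ.ord x)) ≠ 0 := fun h => hw.1 (wt_eq_zero.1 h)
      simp only [wtw]
      omega
    · obtain ⟨w', c, h2, h3⟩ := ih hw.2.2 h
      refine ⟨(x, n) :: w', c, by simp only [wtw]; omega, ?_⟩
      have := conj_zpow (i := c) (a := (Γ.gen x ^ n)⁻¹) (b := r)
      rw [inv_inv] at this
      rw [ev_cons, h3, this, ev_cons]
      group

lemma gen_zpow_congr {x : V} {n m : ℤ} (h : (n : ZMod (Γ.ord x)) = m) :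
    Γ.gen x ^ n = Γ.gen x ^ m := by
  rw [ZMod.intCast_eq_intCast_iff_dvd_sub] at h
  obtain ⟨c, hc⟩ := h
  have : m = n + Γ.ord x * c := by linarith
  rw [this, zpow_add, zpow_mul, zpow_natCast, gen_pow_ord, one_zpow, mul_one]

/-- Every word can be made reduced: a syllable at which reducedness fails can be absorbed by an
exchange, which shortens the word. -/
lemma exists_red {X : Set V} (L : ℕ) : ∀ w : List (V × ℤ), w.length ≤ L → Over X w →
    ∃ w', Over X w' ∧ w'.length ≤ w.length ∧ Red Γ w' ∧ (ev w' : Γ.DyerGroup) = ev w := by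
  induction L with
  | zero =>
    intro w hL _
    obtain rfl : w = [] := by simpa using hL
    exact ⟨[], over_nil X, le_rfl, trivial, rfl⟩
  | succ L ih =>
    rintro (_ | ⟨⟨x, n⟩, u⟩) hL hw
    · exact ⟨[], over_nil X, le_rfl, trivial, rfl⟩
    · rw [over_cons] at hw
      simp only [List.length_cons, add_le_add_iff_right] at hL
      obtain ⟨u', h1, h2, h3, h4⟩ := ih u hL hw.2
      by_cases hn : (n : ZMod (Γ.ord x)) = 0
      · refine ⟨u', h1, by simp; omega, h3, ?_⟩
        rw [ev_cons, h4, gen_zpow_congr (m := 0) (by simpa using hn), zpow_zero, one_mul]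
      · by_cases hc : Γ.coc (ev u') (Γ.gen x, Γ.ord x) = 0
        · exact ⟨(x, n) :: u', over_cons.2 ⟨hw.1, h1⟩, by simpa using h2, ⟨hn, hc, h3⟩,
            by rw [ev_cons, h4, ev_cons]⟩
        · obtain ⟨v, hv1, hv2, hv3⟩ := exists_exchange h1 n hc
          obtain ⟨v', h5, h6, h7, h8⟩ := ih v (by omega) hv1
          exact ⟨v', h5, by simp; omega, h7, by rw [h8, hv3, ev_cons, h4]⟩

lemma exists_red_of_mem {X : Set V} {g : Γ.DyerGroup} (hg : g ∈ Γ.parabolic X) :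
    ∃ w, Over X w ∧ Red Γ w ∧ ev w = g := by
  obtain ⟨w, hw, rfl⟩ := exists_ev hg
  obtain ⟨w', h1, _, h2, h3⟩ := exists_red _ w le_rfl hw
  exact ⟨w', h1, h2, h3⟩

/-- Along a reduced word the syllables contribute to the cocycle at pairwise distinct reflections. -/
lemma nrm_coc_ev {w : List (V × ℤ)} (hw : Red Γ w) : nrm (Γ.coc (ev w)) = wtw Γ w := by
  induction w with
  | nil => rw [ev_nil, coc_one, nrm_zero]; simp [wtw]
  | cons p w ih =>
    obtain ⟨x, n⟩ := p
    rw [ev_cons, coc_mul, coc_gen_zpow, nrm_add_of_disjoint, nrm_act, nrm_sgl, ih hw.2.2]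
    · simp [wtw]
    · rintro ⟨r, k⟩
      by_cases h : r = Γ.gen x ∧ k = Γ.ord x
      · right
        obtain ⟨rfl, rfl⟩ := h
        have h : (Γ.gen x ^ n)⁻¹ * Γ.gen x * Γ.gen x ^ n = Γ.gen x := by group
        change Γ.coc (ev w) ((Γ.gen x ^ n)⁻¹ * Γ.gen x * Γ.gen x ^ n, _) = 0
        rw [h]
        exact hw.2.1
      · left
        exact sgl_of_ne _ h

/-! ### The word length is the norm of the cocycle -/

lemma exists_list_gen_zpow {X : Set V} {x : V} (hx : x ∈ X) (n : ℤ) :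
    ∃ l : List Γ.DyerGroup, l.length = wt (n : ZMod (Γ.ord x)) ∧
      (∀ a ∈ l, a ∈ Γ.gen '' X ∪ (Γ.gen '' X)⁻¹) ∧ l.prod = Γ.gen x ^ n := by
  have h : Γ.gen x ^ n = Γ.gen x ^ (n : ZMod (Γ.ord x)).valMinAbs :=
    gen_zpow_congr (by rw [ZMod.coe_valMinAbs])
  unfold wt
  rw [h]
  generalize (n : ZMod (Γ.ord x)).valMinAbs = v
  obtain ⟨m, rfl | rfl⟩ := v.eq_nat_or_neg
  · refine ⟨List.replicate m (Γ.gen x), by simp, fun a ha => Or.inl ?_, by simp⟩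
    rw [List.eq_of_mem_replicate ha]
    exact ⟨x, hx, rfl⟩
  · refine ⟨List.replicate m (Γ.gen x)⁻¹, by simp, fun a ha => Or.inr ?_, by simp⟩
    rw [List.eq_of_mem_replicate ha, Set.inv_mem_inv]
    exact ⟨x, hx, rfl⟩

lemma exists_list_ev {X : Set V} {w : List (V × ℤ)} (hw : Over X w) :
    ∃ l : List Γ.DyerGroup, l.length = wtw Γ w ∧
      (∀ a ∈ l, a ∈ Γ.gen '' X ∪ (Γ.gen '' X)⁻¹) ∧ l.prod = ev w := by
  induction w with
  | nil => exact ⟨[], rfl, by simp, rfl⟩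
  | cons p w ih =>
    obtain ⟨x, n⟩ := p
    rw [over_cons] at hw
    obtain ⟨l, h1, h2, h3⟩ := ih hw.2
    obtain ⟨l', h1', h2', h3'⟩ := exists_list_gen_zpow hw.1 n
    refine ⟨l' ++ l, by simp [wtw, h1, h1'], fun a ha => ?_, by rw [List.prod_append, h3, h3', ev_cons]⟩
    rcases List.mem_append.1 ha with ha | ha
    exacts [h2' a ha, h2 a ha]

lemma nrm_coc_prod_le {X : Set V} (l : List Γ.DyerGroup)
    (hl : ∀ a ∈ l, a ∈ Γ.gen '' X ∪ (Γ.gen '' X)⁻¹) : nrm (Γ.coc l.prod) ≤ l.length := by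
  induction l with
  | nil => rw [List.prod_nil, coc_one, nrm_zero]; simp
  | cons a l ih =>
    rw [List.prod_cons, coc_mul]
    refine (nrm_add_le _ _).trans ?_
    rw [nrm_act, List.length_cons, add_comm, Nat.cast_succ]
    refine add_le_add (ih fun b hb => hl b (List.mem_cons_of_mem _ hb)) ?_
    have key : ∃ (x : V) (n : ℤ), (n = 1 ∨ n = -1) ∧ a = Γ.gen x ^ n := by
      rcases hl a List.mem_cons_self with ⟨x, _, rfl⟩ | ⟨x, _, hx⟩
      · exact ⟨x, 1, Or.inl rfl, by simp⟩
      · exact ⟨x, -1, Or.inr rfl, by rw [zpow_neg_one, hx, inv_inv]⟩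
    obtain ⟨x, n, hn, rfl⟩ := key
    rw [coc_gen_zpow, nrm_sgl]
    have : wt (n : ZMod (Γ.ord x)) ≤ 1 := by
      rcases hn with rfl | rfl
      · simpa using wt_one_le
      · rw [Int.cast_neg, wt_neg]; simpa using wt_one_le
    exact_mod_cast this

/-- The word length of an element of a parabolic subgroup, with respect to the generators of that
subgroup, is the norm of its cocycle; in particular it is independent of the parabolic. -/
lemma wordLength_eq_nrm {X : Set V} {g : Γ.DyerGroup} (hg : g ∈ Γ.parabolic X) :
    (wordLength (Γ.gen '' X) g : ENNReal) = nrm (Γ.coc g) := by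
  obtain ⟨w, h1, h2, rfl⟩ := exists_red_of_mem hg
  obtain ⟨l, h3, h4, h5⟩ := exists_list_ev h1
  apply le_antisymm
  · rw [nrm_coc_ev h2, Nat.cast_le]
    exact Nat.sInf_le ⟨l, h3, h4, h5⟩
  · obtain ⟨l', h6, h7, h8⟩ := Nat.sInf_mem (s := {n | ∃ w' : List Γ.DyerGroup, w'.length = n ∧
      (∀ a ∈ w', a ∈ Γ.gen '' X ∪ (Γ.gen '' X)⁻¹) ∧ w'.prod = ev w}) ⟨_, l, h3, h4, h5⟩
    have := nrm_coc_prod_le l' h7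
    rw [h8, h6] at this
    exact this

variable (Γ) in
/-- The word length with respect to all generators. -/
noncomputable def len (g : Γ.DyerGroup) : ℕ := wordLength (Set.range Γ.gen) g

lemma len_eq_nrm (g : Γ.DyerGroup) : (Γ.len g : ENNReal) = nrm (Γ.coc g) := by
  have : g ∈ Γ.parabolic Set.univ := by rw [parabolic_univ]; trivial
  rw [← wordLength_eq_nrm this, Set.image_univ, len]

lemma wordLength_eq_len {X : Set V} {g : Γ.DyerGroup} (hg : g ∈ Γ.parabolic X) :
    wordLength (Γ.gen '' X) g = Γ.len g := by
  have := wordLength_eq_nrm hg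
  rw [← len_eq_nrm] at this
  exact_mod_cast this

lemma len_ev {w : List (V × ℤ)} (hw : Red Γ w) : Γ.len (ev w) = wtw Γ w := by
  have := nrm_coc_ev hw
  rw [← len_eq_nrm] at this
  exact_mod_cast this

lemma len_ev_le (w : List (V × ℤ)) : Γ.len (ev w) ≤ wtw Γ w := by
  obtain ⟨l, h3, h4, h5⟩ := exists_list_ev (Γ := Γ) (X := Set.univ) (w := w) fun p _ => trivial
  rw [Set.image_univ] at h4
  exact Nat.sInf_le ⟨l, h3, h4, h5⟩

lemma len_mul_le (g h : Γ.DyerGroup) : Γ.len (g * h) ≤ Γ.len g + Γ.len h := by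
  have : (Γ.len (g * h) : ENNReal) ≤ Γ.len g + Γ.len h := by
    rw [len_eq_nrm, len_eq_nrm, len_eq_nrm, coc_mul, ← nrm_act g (Γ.coc h)]
    exact nrm_add_le _ _
  exact_mod_cast this

lemma len_one : Γ.len 1 = 0 := by
  have := len_eq_nrm (Γ := Γ) 1
  rw [coc_one, nrm_zero] at this
  exact_mod_cast this

lemma len_eq_zero {g : Γ.DyerGroup} (h : Γ.len g = 0) : g = 1 := by
  have hg : g ∈ Γ.parabolic Set.univ := by rw [parabolic_univ]; trivial
  obtain ⟨w, -, h2, rfl⟩ := exists_red_of_mem hg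
  rw [len_ev h2] at h
  rcases w with _ | ⟨⟨x, n⟩, u⟩
  · rfl
  · simp only [wtw, Nat.add_eq_zero_iff] at h
    exact absurd (wt_eq_zero.1 h.1) h2.1

/-- A reflection in the support of the cocycle has a power that shortens the element. -/
lemma exists_len_lt {g r : Γ.DyerGroup} {k : ℕ} (h : Γ.coc g (r, k) ≠ 0) :
    ∃ c : ℤ, Γ.len (r ^ c * g) < Γ.len g := by
  have hg : g ∈ Γ.parabolic Set.univ := by rw [parabolic_univ]; trivial
  obtain ⟨w, -, h2, rfl⟩ := exists_red_of_mem hg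
  obtain ⟨w', c, h3, h4⟩ := exists_deletion h2 h
  refine ⟨c, ?_⟩
  rw [← h4, len_ev h2]
  exact (len_ev_le w').trans_lt h3

/-! ### Minimal coset representatives -/

variable (Γ) in
/-- The elements of minimal word length in their coset `D_X a`. -/
def minRep (X : Set V) : Set Γ.DyerGroup :=
  {a | ∀ h ∈ Γ.parabolic X, Γ.len a ≤ Γ.len (h * a)}

/-- Otherwise a power of `q` would shorten `a` within its coset. -/
lemma coc_eq_zero_of_minRep {X : Set V} {a q : Γ.DyerGroup} (ha : a ∈ Γ.minRep X)
    (hq : q ∈ Γ.parabolic X) (k : ℕ) : Γ.coc a (q, k) = 0 := by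
  by_contra h
  obtain ⟨c, hc⟩ := exists_len_lt h
  exact absurd (ha _ (zpow_mem hq c)) (not_le.2 hc)

lemma coc_eq_zero_of_notMem {X : Set V} {h r : Γ.DyerGroup} (hh : h ∈ Γ.parabolic X)
    (hr : r ∉ Γ.parabolic X) (k : ℕ) : Γ.coc h (r, k) = 0 := by
  by_contra hc
  obtain ⟨w, hw, rfl⟩ := exists_ev hh
  exact hr (mem_of_coc_ne hw hc)

lemma act_coc_eq_zero {X : Set V} {h a r : Γ.DyerGroup} (hh : h ∈ Γ.parabolic X)
    (ha : a ∈ Γ.minRep X) (hr : r ∈ Γ.parabolic X) (k : ℕ) : Γ.act h (Γ.coc a) (r, k) = 0 :=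
  coc_eq_zero_of_minRep ha (mul_mem (mul_mem (inv_mem hh) hr) hh) k

lemma coc_mul_minRep {X : Set V} {h a r : Γ.DyerGroup} (hh : h ∈ Γ.parabolic X)
    (ha : a ∈ Γ.minRep X) (hr : r ∈ Γ.parabolic X) (k : ℕ) :
    Γ.coc (h * a) (r, k) = Γ.coc h (r, k) := by
  rw [coc_mul, Pi.add_apply, act_coc_eq_zero hh ha hr, add_zero]

/-- The cocycle of `h` is supported in `D_X`, and the translate of that of `a` vanishes there. -/
lemma len_mul_minRep {X : Set V} {h a : Γ.DyerGroup} (hh : h ∈ Γ.parabolic X)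
    (ha : a ∈ Γ.minRep X) : Γ.len (h * a) = Γ.len h + Γ.len a := by
  have : (Γ.len (h * a) : ENNReal) = Γ.len h + Γ.len a := by
    rw [len_eq_nrm, len_eq_nrm, len_eq_nrm, coc_mul, ← nrm_act h (Γ.coc a)]
    refine nrm_add_of_disjoint _ _ ?_
    rintro ⟨r, k⟩
    by_cases hr : r ∈ Γ.parabolic X
    · exact Or.inr (act_coc_eq_zero hh ha hr k)
    · exact Or.inl (coc_eq_zero_of_notMem hh hr k)
  exact_mod_cast this

lemma exists_minRep (X : Set V) (g : Γ.DyerGroup) :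
    ∃ h ∈ Γ.parabolic X, ∃ a ∈ Γ.minRep X, h * a = g := by
  have hne : ({n | ∃ h ∈ Γ.parabolic X, Γ.len (h * g) = n} : Set ℕ).Nonempty :=
    ⟨_, 1, one_mem _, rfl⟩
  obtain ⟨h, hh, hn⟩ := Nat.sInf_mem hne
  refine ⟨h⁻¹, inv_mem hh, h * g, fun u hu => ?_, by group⟩
  rw [hn]
  exact Nat.sInf_le ⟨u * h, mul_mem hu hh, by rw [mul_assoc]⟩

lemma minRep_unique {X : Set V} {h h' a a' : Γ.DyerGroup} (hh : h ∈ Γ.parabolic X)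
    (hh' : h' ∈ Γ.parabolic X) (ha : a ∈ Γ.minRep X) (ha' : a' ∈ Γ.minRep X)
    (he : h * a = h' * a') : h = h' ∧ a = a' := by
  have hu : h'⁻¹ * h ∈ Γ.parabolic X := mul_mem (inv_mem hh') hh
  have h1 : h'⁻¹ * h * a = a' := by rw [mul_assoc, he]; group
  have h2 := len_mul_minRep hu ha
  have h3 := ha' _ (inv_mem hu)
  rw [← h1, inv_mul_cancel_left] at h3
  have h4 := len_eq_zero (g := h'⁻¹ * h) (by omega)
  rw [h4, one_mul] at h1
  exact ⟨(inv_mul_eq_one.1 h4).symm, h1⟩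

/-- Minimality with respect to `X` can be tested one generator at a time. -/
lemma mem_minRep_iff {X : Set V} {a : Γ.DyerGroup} :
    a ∈ Γ.minRep X ↔ ∀ x ∈ X, Γ.coc a (Γ.gen x, Γ.ord x) = 0 := by
  constructor
  · exact fun ha x hx => coc_eq_zero_of_minRep ha (gen_mem hx) _
  · intro h
    obtain ⟨u, hu, a', ha', rfl⟩ := exists_minRep X a
    obtain ⟨w, h1, h2, rfl⟩ := exists_red_of_mem hu
    rcases w with _ | ⟨⟨x, n⟩, v⟩
    · rwa [ev_nil, one_mul]
    · have hx := (over_cons.1 h1).1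
      have := h x hx
      rw [coc_mul_minRep hu ha' (gen_mem hx)] at this
      exact absurd this (coc_cons_self_ne h2)

end DyerGraph

namespace DyerGraph

variable {V : Type*} {Γ : DyerGraph V}

/-! ### Distinct generators are distinct elements -/

/-- The matrix of the geometric representation: `-2` on the diagonal, `2 cos (π / m)` on an edge
with label `m`, and `0` elsewhere. -/
noncomputable def geom (Γ : DyerGraph V) (x z : V) : ℂ :=
  if x = z then -2 else
    if Γ.Adj x z then Complex.exp (Real.pi * Complex.I / Γ.m x z) +
      (Complex.exp (Real.pi * Complex.I / Γ.m x z))⁻¹ else 0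

lemma geom_self (x : V) : Γ.geom x x = -2 := by simp [geom]

lemma geom_symm (x z : V) : Γ.geom x z = Γ.geom z x := by
  unfold geom
  rw [Γ.m_symm x z]
  by_cases h : x = z
  · simp [h]
  · have h1 : Γ.Adj x z ↔ Γ.Adj z x := ⟨Γ.symm, Γ.symm⟩
    simp [h, Ne.symm h, h1]

/-- The reflection attached to `x`, in coordinates dual to the simple roots. -/
noncomputable def reflFun (Γ : DyerGraph V) (x : V) (F : V → ℂ) : V → ℂ :=
  fun z => F z + Γ.geom x z * F x

lemma reflFun_invol (x : V) : Function.Involutive (Γ.reflFun x) := by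
  intro F
  funext z
  simp only [reflFun, geom_self]
  ring

/-- The reflection attached to `x` as a permutation. -/
noncomputable def reflPerm (Γ : DyerGraph V) (x : V) : Equiv.Perm (V → ℂ) :=
  (reflFun_invol (Γ := Γ) x).toPerm

lemma reflPerm_apply (x : V) (F : V → ℂ) (z : V) :
    Γ.reflPerm x F z = F z + Γ.geom x z * F x := rfl

lemma reflPerm_mul_self (x : V) : Γ.reflPerm x * Γ.reflPerm x = 1 := by
  ext1 F
  exact reflFun_invol x F

lemma reflPerm_mul_apply (x y : V) (F : V → ℂ) (z : V) :
    (Γ.reflPerm x * Γ.reflPerm y) F z =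
      F z + (Γ.geom y z * F y + Γ.geom x z * (F x + Γ.geom y x * F y)) := by
  change (F z + Γ.geom y z * F y) + Γ.geom x z * (F x + Γ.geom y x * F y) = _
  ring

lemma reflPerm_comm {x y : V} (h : Γ.geom x y = 0) :
    Γ.reflPerm x * Γ.reflPerm y = Γ.reflPerm y * Γ.reflPerm x := by
  ext F z
  rw [reflPerm_mul_apply, reflPerm_mul_apply, geom_symm y x, h]
  ring

/-- When `geom x y = l + l⁻¹`, the rotation `s_x s_y` scales the functional `F ↦ F x + l F y`
by `l²`. -/
lemma eigen {x y : V} {l l' : ℂ} (hl : l * l' = 1) (hc : Γ.geom x y = l + l') (F : V → ℂ) (n : ℕ) :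
    ((Γ.reflPerm x * Γ.reflPerm y) ^ n) F x + l * ((Γ.reflPerm x * Γ.reflPerm y) ^ n) F y =
      (l ^ 2) ^ n * (F x + l * F y) := by
  induction n with
  | zero => simp
  | succ n ih =>
    rw [pow_succ' (Γ.reflPerm x * Γ.reflPerm y), Equiv.Perm.mul_apply, reflPerm_mul_apply,
      reflPerm_mul_apply, geom_self, geom_self, geom_symm y x, hc, pow_succ, mul_right_comm, ← ih]
    generalize ((Γ.reflPerm x * Γ.reflPerm y) ^ n) F x = a
    generalize ((Γ.reflPerm x * Γ.reflPerm y) ^ n) F y = b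
    linear_combination (a + b * (l + l') + l * b) * hl

lemma reflPerm_pow_apply (x y : V) (F : V → ℂ) (z : V) (n : ℕ) :
    ((Γ.reflPerm x * Γ.reflPerm y) ^ n) F z = F z +
      (Γ.geom y z * ∑ j ∈ Finset.range n, ((Γ.reflPerm x * Γ.reflPerm y) ^ j) F y +
      Γ.geom x z * (∑ j ∈ Finset.range n, ((Γ.reflPerm x * Γ.reflPerm y) ^ j) F x +
        Γ.geom y x * ∑ j ∈ Finset.range n, ((Γ.reflPerm x * Γ.reflPerm y) ^ j) F y)) := by
  induction n with
  | zero => simp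
  | succ n ih =>
    rw [pow_succ' (Γ.reflPerm x * Γ.reflPerm y), Equiv.Perm.mul_apply, reflPerm_mul_apply, ih]
    simp only [Finset.sum_range_succ]
    ring

/-- With `l = exp (π i / m)`, the two functionals of `eigen` for `l` and `l⁻¹` are independent, and
their scaling factors `l²`, `l⁻²` are primitive `m`-th roots of unity. Hence the orbit sums of `F x`
and `F y` vanish, and by `reflPerm_pow_apply` the `m`-th power of the rotation is trivial. -/
lemma reflPerm_mul_pow {x y : V} (h : Γ.Adj x y) :
    (Γ.reflPerm x * Γ.reflPerm y) ^ Γ.m x y = 1 := by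
  have hxy : x ≠ y := by rintro rfl; exact Γ.loopless x h
  have hm := Γ.m_ge h
  set m := Γ.m x y with hmdef
  set l : ℂ := Complex.exp (Real.pi * Complex.I / m) with hldef
  have hl0 : l ≠ 0 := Complex.exp_ne_zero _
  have hc : Γ.geom x y = l + l⁻¹ := by simp [geom, hxy, h, hldef, hmdef]
  have hprim : IsPrimitiveRoot (l ^ 2) m := by
    have := Complex.isPrimitiveRoot_exp m (by omega)
    convert this using 1
    rw [hldef, ← Complex.exp_nat_mul]
    congr 1
    push_cast
    ring
  have hprim' : IsPrimitiveRoot (l⁻¹ ^ 2) m := by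
    rw [inv_pow]; exact hprim.inv
  set A := Γ.reflPerm x * Γ.reflPerm y with hA
  ext F z
  have e1 : ∑ j ∈ Finset.range m, (A ^ j) F x + l * ∑ j ∈ Finset.range m, (A ^ j) F y = 0 := by
    rw [Finset.mul_sum, ← Finset.sum_add_distrib]
    simp only [hA, eigen (mul_inv_cancel₀ hl0) hc]
    rw [← Finset.sum_mul, hprim.geom_sum_eq_zero (by omega), zero_mul]
  have e2 : ∑ j ∈ Finset.range m, (A ^ j) F x + l⁻¹ * ∑ j ∈ Finset.range m, (A ^ j) F y = 0 := by
    rw [Finset.mul_sum, ← Finset.sum_add_distrib]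
    simp only [hA, eigen (inv_mul_cancel₀ hl0) (hc.trans (add_comm _ _))]
    rw [← Finset.sum_mul, hprim'.geom_sum_eq_zero (by omega), zero_mul]
  have hne : l - l⁻¹ ≠ 0 := by
    intro h0
    apply hprim.ne_one (by omega)
    have : l = l⁻¹ := sub_eq_zero.1 h0
    calc l ^ 2 = l * l := pow_two l
      _ = l * l⁻¹ := by rw [← this]
      _ = 1 := mul_inv_cancel₀ hl0
  have e3 : ∑ j ∈ Finset.range m, (A ^ j) F y = 0 := by
    have : (l - l⁻¹) * ∑ j ∈ Finset.range m, (A ^ j) F y = 0 := by linear_combination e1 - e2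
    exact (mul_eq_zero.1 this).resolve_left hne
  rw [e3, mul_zero, add_zero] at e1
  rw [hA, reflPerm_pow_apply, ← hA, e1, e3]
  simp

/-- The geometric representation of the Coxeter group `D_2`, extended trivially to the other
generators, separates the generators of order two. -/
lemma gen_ne_of_two {x z : V} (hx : Γ.f x = 2) (hz : Γ.f z = 2) (hne : x ≠ z) :
    Γ.gen x ≠ Γ.gen z := by
  let ρ : V → Equiv.Perm (V → ℂ) := fun v => if Γ.f v = 2 then Γ.reflPerm v else 1
  have h1 : ∀ v, ρ v ^ Γ.ord v = 1 := by
    intro v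
    by_cases hv : Γ.f v = 2
    · simp only [ρ, hv, if_true, Γ.ord_eq_two hv, pow_two, reflPerm_mul_self]
    · simp only [ρ, hv, if_false, one_pow]
  have h2 : ∀ a b, Γ.Adj a b → alt (ρ a) (ρ b) (Γ.m a b) = alt (ρ b) (ρ a) (Γ.m a b) := by
    intro a b hab
    refine Γ.alt_eq_of ρ h1 hab (fun hm => ?_) fun ha hb => ?_
    · by_cases ha : Γ.f a = 2
      · by_cases hb : Γ.f b = 2
        · simp only [ρ, ha, hb, if_true]
          apply reflPerm_comm
          have hne : a ≠ b := by rintro rfl; exact Γ.loopless a hab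
          have : (Real.pi * Complex.I / (2 : ℕ) : ℂ) = Real.pi / 2 * Complex.I := by
            push_cast; ring
          simp only [geom, hne, if_false, hab, if_true, hm]
          rw [this, Complex.exp_pi_div_two_mul_I]
          simp
        · simp [ρ, hb]
      · simp [ρ, ha]
    · simp only [ρ, ha, hb, if_true]
      exact reflPerm_mul_pow hab
  intro heq
  have h3 := congrArg (Γ.homOfGen ρ h1 h2) heq
  rw [homOfGen_gen, homOfGen_gen] at h3
  simp only [ρ, hx, hz, if_true] at h3
  have h4 := congrArg (fun σ : Equiv.Perm (V → ℂ) => σ (Pi.single x 1) x) h3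
  simp only [reflPerm_apply, geom_self, Pi.single_eq_same, Pi.single_eq_of_ne hne.symm] at h4
  norm_num at h4

/-- A generator `x` that is not an involution is separated from the others by the retraction onto
the cyclic group `ZMod (ord x)`. -/
lemma gen_ne_of_ne_two {x z : V} (hx : Γ.f x ≠ 2) (hne : x ≠ z) : Γ.gen x ≠ Γ.gen z := by
  let ρ : V → Multiplicative (ZMod (Γ.ord x)) := fun v => if v = x then Multiplicative.ofAdd 1 else 1
  have h1 : ∀ v, ρ v ^ Γ.ord v = 1 := by
    intro v
    by_cases hv : v = x
    · subst hv
      simp only [ρ, if_true, ← ofAdd_nsmul, nsmul_eq_mul, mul_one, ZMod.natCast_self, ofAdd_zero]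
    · simp only [ρ, hv, if_false, one_pow]
  have h2 : ∀ a b, Γ.Adj a b → alt (ρ a) (ρ b) (Γ.m a b) = alt (ρ b) (ρ a) (Γ.m a b) := by
    intro a b hab
    refine Γ.alt_eq_of ρ h1 hab (fun _ => mul_comm _ _) fun ha hb => ?_
    have hax : a ≠ x := by rintro rfl; exact hx ha
    have hbx : b ≠ x := by rintro rfl; exact hx hb
    simp [ρ, hax, hbx]
  intro heq
  have h3 := congrArg (Γ.homOfGen ρ h1 h2) heq
  rw [homOfGen_gen, homOfGen_gen] at h3
  simp only [ρ, if_true, hne.symm, if_false, ofAdd_eq_one] at h3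
  have : Nontrivial (ZMod (Γ.ord x)) := ZMod.nontrivial_iff.2 (Γ.ord_ne_one x)
  exact one_ne_zero h3

lemma gen_inj {x z : V} (h : Γ.gen x = Γ.gen z) (ho : Γ.ord x = Γ.ord z) : x = z := by
  by_contra hne
  by_cases hx : Γ.f x = 2
  · exact gen_ne_of_two hx (Γ.f_eq_two (ho ▸ Γ.ord_eq_two hx)) hne h
  · exact gen_ne_of_ne_two hx hne h

/-- A reduced word over `X` for `xⁿ` would begin with a letter whose reflection is that of `x`,
which forces `x ∈ X` because distinct generators are distinct elements. -/
lemma zpow_notMem {X : Set V} {x : V} (hx : x ∉ X) {n : ℤ} (hn : (n : ZMod (Γ.ord x)) ≠ 0) :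
    Γ.gen x ^ n ∉ Γ.parabolic X := by
  intro hmem
  obtain ⟨w, h1, h2, h3⟩ := exists_red_of_mem hmem
  have hc := coc_gen_zpow (Γ := Γ) x n
  rw [← h3] at hc
  rcases w with _ | ⟨⟨z, k⟩, w⟩
  · rw [ev_nil, coc_one] at hc
    have := congrFun hc (Γ.gen x, Γ.ord x)
    rw [sgl_self] at this
    exact hn this.symm
  · have h4 := coc_cons_self_ne h2
    rw [hc] at h4
    have h5 : Γ.gen z = Γ.gen x ∧ Γ.ord z = Γ.ord x := by
      by_contra h
      exact h4 (sgl_of_ne _ h)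
    have := gen_inj h5.1 h5.2
    exact hx (this ▸ (over_cons.1 h1).1)

/-! ### Non-adjacent generators generate a free product -/

/-- Words with nontrivial syllables in which consecutive letters are distinct. -/
def Good (Γ : DyerGraph V) (w : List (V × ℤ)) : Prop :=
  (∀ p ∈ w, (p.2 : ZMod (Γ.ord p.1)) ≠ 0) ∧ w.IsChain fun p q => p.1 ≠ q.1

lemma Red.good {w : List (V × ℤ)} (h : Red Γ w) : Good Γ w := by
  induction w with
  | nil => exact ⟨by simp, .nil⟩
  | cons p w ih =>
    obtain ⟨x, n⟩ := p
    obtain ⟨h1, h2⟩ := ih h.2.2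
    refine ⟨?_, ?_⟩
    · intro p hp
      rcases List.mem_cons.1 hp with rfl | hp
      exacts [h.1, h1 p hp]
    · rw [List.isChain_cons]
      refine ⟨?_, h2⟩
      rintro ⟨y, m⟩ hy (rfl : x = y)
      rcases w with _ | ⟨q, w⟩
      · simp at hy
      · simp only [List.head?_cons, Option.mem_some_iff] at hy
        subst hy
        exact coc_cons_self_ne h.2.2 h.2.1

/-- If `x` and `y` are not adjacent, then the Dyer group maps to the amalgamated product of
`D_{V ∖ x}` and `D_{V ∖ y}` over `D_{V ∖ {x, y}}`, in which alternating words in `x` and `y`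
are nontrivial by the normal form theorem. -/
lemma ev_ne_one {x y : V} (hxy : x ≠ y) (hadj : ¬ Γ.Adj x y) {w : List (V × ℤ)}
    (hw : Over {x, y} w) (hg : Good Γ w) (hne : w ≠ []) : (ev w : Γ.DyerGroup) ≠ 1 := by
  let c : Bool → V := fun b => cond b x y
  let G : Bool → Type _ := fun b => ↥(Γ.parabolic {z | z ≠ c b})
  let P : Subgroup Γ.DyerGroup := Γ.parabolic {z | z ≠ x ∧ z ≠ y}
  have hle : ∀ b, P ≤ Γ.parabolic {z | z ≠ c b} := by
    intro b
    refine Subgroup.closure_mono (Set.image_mono ?_)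
    rintro z ⟨h1, h2⟩
    cases b
    exacts [h2, h1]
  let φ : ∀ b, P →* G b := fun b => Subgroup.inclusion (hle b)
  let gn : ∀ b z, z ≠ c b → G b := fun b z hz => ⟨Γ.gen z, gen_mem hz⟩
  have hxc : x ≠ c false := hxy
  have hyc : y ≠ c true := hxy.symm
  let ρ : V → Monoid.PushoutI φ := fun z =>
    if hz : z ≠ x then Monoid.PushoutI.of true (gn true z hz)
    else Monoid.PushoutI.of false (gn false x hxc)
  have key : ∀ b z (hz : z ≠ c b), ρ z = Monoid.PushoutI.of b (gn b z hz) := by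
    intro b z hz
    by_cases hzx : z = x
    · subst hzx
      cases b
      · simp [ρ]
      · exact absurd rfl hz
    · cases b
      · have hzy : z ≠ y := hz
        let u : P := ⟨Γ.gen z, gen_mem ⟨hzx, hzy⟩⟩
        have e1 := Monoid.PushoutI.of_apply_eq_base φ true u
        have e2 := Monoid.PushoutI.of_apply_eq_base φ false u
        have : ρ z = Monoid.PushoutI.of true (gn true z hzx) := by simp [ρ, hzx]
        rw [this]
        exact e1.trans e2.symm
      · simp [ρ, hzx]
  have h1 : ∀ z, ρ z ^ Γ.ord z = 1 := by
    intro z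
    obtain ⟨b, hb⟩ : ∃ b, z ≠ c b := by
      by_cases hz : z = x
      · exact ⟨false, hz ▸ hxc⟩
      · exact ⟨true, hz⟩
    rw [key b z hb, ← map_pow]
    have : gn b z hb ^ Γ.ord z = 1 := Subtype.ext (Γ.gen_pow_ord z)
    rw [this, map_one]
  have h2 : ∀ z z', Γ.Adj z z' → alt (ρ z) (ρ z') (Γ.m z z') = alt (ρ z') (ρ z) (Γ.m z z') := by
    intro z z' hzz
    obtain ⟨b, hb, hb'⟩ : ∃ b, z ≠ c b ∧ z' ≠ c b := by
      by_contra! hcon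
      have ht := hcon true
      have hf := hcon false
      simp only [c, cond_true, cond_false] at ht hf
      by_cases hz : z = x
      · subst hz
        exact hadj (hf hxy ▸ hzz)
      · have hz' := ht hz
        subst hz'
        by_cases hz2 : z = y
        · subst hz2; exact hadj (Γ.symm hzz)
        · exact hxy (hf hz2)
    rw [key b z hb, key b z' hb', ← map_alt, ← map_alt]
    congr 1
    apply Subtype.ext
    have := Γ.gen_alt hzz
    have e := map_alt (Γ.parabolic {z | z ≠ c b}).subtype (Γ.m z z')
    exact (e (gn b z hb) (gn b z' hb')).trans (this.trans (e (gn b z' hb') (gn b z hb)).symm)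
  let ψ := Γ.homOfGen ρ h1 h2
  let sig : V × ℤ → Σ b, G b := fun p =>
    if p.1 = x then ⟨false, gn false x hxc ^ p.2⟩ else ⟨true, gn true y hyc ^ p.2⟩
  have sigx : ∀ n : ℤ, sig (x, n) = ⟨false, gn false x hxc ^ n⟩ := fun n => by simp [sig]
  have sigy : ∀ n : ℤ, sig (y, n) = ⟨true, gn true y hyc ^ n⟩ := fun n => by
    simp [sig, hxy.symm]
  have hmem : ∀ p ∈ w, (sig p).2 ∉ (φ (sig p).1).range := by
    rintro ⟨v, n⟩ hp ⟨u, hu⟩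
    have hn := hg.1 _ hp
    rcases hw _ hp with rfl | hv
    · rw [sigx] at hu
      have : (u : Γ.DyerGroup) = Γ.gen v ^ n := congrArg Subtype.val hu
      exact zpow_notMem (X := {z | z ≠ v ∧ z ≠ y}) (fun h => h.1 rfl) hn (this ▸ u.2)
    · obtain rfl : v = y := hv
      rw [sigy] at hu
      have : (u : Γ.DyerGroup) = Γ.gen v ^ n := congrArg Subtype.val hu
      exact zpow_notMem (X := {z | z ≠ x ∧ z ≠ v}) (fun h => h.2 rfl) hn (this ▸ u.2)
  have hψ : ∀ p ∈ w, ψ (Γ.gen p.1 ^ p.2) = Monoid.PushoutI.of (sig p).1 (sig p).2 := by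
    rintro ⟨v, n⟩ hp
    rcases hw _ hp with rfl | hv
    · rw [sigx, map_zpow, map_zpow, homOfGen_gen, key false v hxc]
    · obtain rfl : v = y := hv
      rw [sigy, map_zpow, map_zpow, homOfGen_gen, key true v hyc]
  let W : Monoid.CoprodI.Word G :=
    { toList := w.map sig
      ne_one := by
        intro l hl
        obtain ⟨p, hp, rfl⟩ := List.mem_map.1 hl
        intro h
        exact hmem p hp (h ▸ one_mem _)
      chain_ne := by
        rw [List.isChain_map]
        refine hg.2.imp_of_mem_imp ?_
        rintro ⟨v, n⟩ ⟨v', n'⟩ hv hv' hne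
        rcases hw _ hv with hv1 | hv1 <;> rcases hw _ hv' with hv2 | hv2
        · exact absurd (hv1.trans hv2.symm) hne
        · obtain rfl : v = x := hv1
          obtain rfl : v' = y := hv2
          rw [sigx, sigy]; simp
        · obtain rfl : v = y := hv1
          obtain rfl : v' = x := hv2
          rw [sigx, sigy]; simp
        · exact absurd (hv1.trans hv2.symm) hne }
  have hred : Monoid.PushoutI.Reduced φ W := by
    intro l hl
    obtain ⟨p, hp, rfl⟩ := List.mem_map.1 hl
    exact hmem p hp
  intro hev
  have hprod : Monoid.PushoutI.ofCoprodI (φ := φ) W.prod = ψ (ev w) := by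
    rw [Monoid.CoprodI.Word.prod, map_list_prod, ev, map_list_prod]
    simp only [W, List.map_map]
    congr 1
    refine List.map_congr_left fun p hp => ?_
    simp only [Function.comp_apply, Monoid.PushoutI.ofCoprodI_of]
    exact (hψ p hp).symm
  have := hred.eq_empty_of_mem_range (fun b => Subgroup.inclusion_injective _)
    (by rw [hprod, hev, map_one]; exact one_mem _)
  have h3 : w.map sig = [] := congrArg Monoid.CoprodI.Word.toList this
  exact hne (List.map_eq_nil_iff.1 h3)

/-! ### Elements with all generators as left descents -/

/-- A left descent `x` of `h` is the first letter of some reduced word for `h`. -/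
lemma exists_red_head {X : Set V} {h : Γ.DyerGroup} (hh : h ∈ Γ.parabolic X) {x : V} (hx : x ∈ X)
    (hc : Γ.coc h (Γ.gen x, Γ.ord x) ≠ 0) :
    ∃ (n : ℤ) (w : List (V × ℤ)), Over X ((x, n) :: w) ∧ Red Γ ((x, n) :: w) ∧
      ev ((x, n) :: w) = h := by
  obtain ⟨u, hu, a, ha, rfl⟩ := exists_minRep {x} h
  rw [parabolic, Set.image_singleton] at hu
  obtain ⟨n, rfl⟩ := Subgroup.mem_closure_singleton.1 hu
  have ha' : a ∈ Γ.parabolic X := by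
    have := mul_mem (inv_mem (zpow_mem (gen_mem hx) n)) hh
    rwa [inv_mul_cancel_left] at this
  obtain ⟨w, h1, h2, rfl⟩ := exists_red_of_mem ha'
  have h3 := coc_eq_zero_of_minRep ha (gen_mem rfl) (Γ.ord x)
  refine ⟨n, w, over_cons.2 ⟨hx, h1⟩, ⟨?_, h3, h2⟩, ev_cons x n w⟩
  rwa [← ev_cons, coc_cons_self, h3, add_zero] at hc

/-- If `x` and `y` were not adjacent, comparing reduced words for `h` beginning with `x` and with `y`
would give a nonempty alternating word that is trivial. -/
lemma adj_of_coc_ne {x y : V} (hxy : x ≠ y) {h : Γ.DyerGroup} (hh : h ∈ Γ.parabolic {x, y})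
    (hx : Γ.coc h (Γ.gen x, Γ.ord x) ≠ 0) (hy : Γ.coc h (Γ.gen y, Γ.ord y) ≠ 0) :
    Γ.Adj x y := by
  by_contra hadj
  obtain ⟨n, w, h1, h2, h3⟩ := exists_red_head hh (by simp) hx
  obtain ⟨n', w', h1', h2', h3'⟩ := exists_red_head hh (by simp) hy
  obtain ⟨g1, g2⟩ := h2.good
  obtain ⟨g1', g2'⟩ := h2'.good
  refine ev_ne_one hxy hadj (w := invw ((x, n) :: w) ++ (y, n') :: w') ?_ ⟨?_, ?_⟩ (by simp) ?_
  · intro p hp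
    rcases List.mem_append.1 hp with hp | hp
    · simp only [invw, List.mem_reverse, List.mem_map] at hp
      obtain ⟨q, hq, rfl⟩ := hp
      exact h1 q hq
    · exact h1' p hp
  · intro p hp
    rcases List.mem_append.1 hp with hp | hp
    · simp only [invw, List.mem_reverse, List.mem_map] at hp
      obtain ⟨q, hq, rfl⟩ := hp
      simpa using g1 q hq
    · exact g1' p hp
  · rw [List.isChain_append]
    refine ⟨?_, g2', ?_⟩
    · rw [invw, List.isChain_reverse, List.isChain_map]
      exact g2.imp fun _ _ h => h.symm
    · intro p hp q hq
      simp only [invw, List.getLast?_reverse, List.map_cons, List.head?_cons,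
        Option.mem_some_iff] at hp hq
      subst hp hq
      exact hxy
  · rw [ev_append, ev_invw, h3, h3', inv_mul_cancel]

/-- If `h` has all the involutive generators as left descents, then every element of the Coxeter
group `D_2` is a prefix of `h`, so that its length is at most that of `h`. -/
lemma len_le_of_descents {h : Γ.DyerGroup}
    (hc : ∀ x ∈ Γ.V2, Γ.coc h (Γ.gen x, Γ.ord x) ≠ 0) {w : List (V × ℤ)} (hw : Over Γ.V2 w)
    (hr : Red Γ w) : Γ.len (ev w) + Γ.len ((ev w)⁻¹ * h) ≤ Γ.len h := by
  induction w with
  | nil => rw [ev_nil, len_one, inv_one, one_mul, zero_add]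
  | cons p w ih =>
    obtain ⟨x, n⟩ := p
    rw [over_cons] at hw
    have ih := ih hw.2 hr.2.2
    have hx2 : Γ.ord x = 2 := Γ.ord_eq_two hw.1
    have hxx := Γ.gen_mul_self hw.1
    have hgn : Γ.gen x ^ n = Γ.gen x := by
      have : (n : ZMod (Γ.ord x)) = (1 : ℤ) := by
        have h0 := hr.1
        have h2 : ∀ a : ZMod 2, a ≠ 0 → a = 1 := by decide
        rw [hx2] at h0 ⊢
        rw [h2 _ h0, Int.cast_one]
      rw [gen_zpow_congr this, zpow_one]
    set u : Γ.DyerGroup := ev w with hu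
    set k : Γ.DyerGroup := u⁻¹ * h with hk
    have hhk : h = u * k := by rw [hk, mul_inv_cancel_left]
    -- The conjugate of `x` by `u` lies in the support of the cocycle of the remaining factor `k`.
    have hq : Γ.coc k (u⁻¹ * Γ.gen x * u, Γ.ord x) ≠ 0 := by
      have := hc x hw.1
      rw [hhk, coc_mul, Pi.add_apply, hr.2.1, zero_add] at this
      exact this
    obtain ⟨c, hlt⟩ := exists_len_lt hq
    have hqq : (u⁻¹ * Γ.gen x * u) * (u⁻¹ * Γ.gen x * u) = 1 := by
      calc (u⁻¹ * Γ.gen x * u) * (u⁻¹ * Γ.gen x * u) = u⁻¹ * (Γ.gen x * Γ.gen x) * u := by group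
        _ = 1 := by rw [hxx]; group
    have hlt1 : Γ.len (u⁻¹ * Γ.gen x * u * k) < Γ.len k := by
      obtain ⟨d, rfl | rfl⟩ := Int.even_or_odd' c
      · rw [zpow_mul, zpow_two, hqq, one_zpow, one_mul] at hlt
        exact absurd hlt (lt_irrefl _)
      · rwa [zpow_add, zpow_mul, zpow_two, hqq, one_zpow, one_mul, zpow_one] at hlt
    have e1 : (ev ((x, n) :: w) : Γ.DyerGroup) = Γ.gen x * u := by rw [ev_cons, hgn]
    have e2 : (Γ.gen x * u)⁻¹ * h = u⁻¹ * Γ.gen x * u * k := by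
      rw [mul_inv_rev, inv_eq_of_mul_eq_one_left hxx, hhk]; group
    have e3 : Γ.len (Γ.gen x) ≤ 1 := by
      have := len_ev_le (Γ := Γ) [(x, 1)]
      rw [ev_cons, ev_nil, zpow_one, mul_one] at this
      refine this.trans ?_
      simpa [wtw] using wt_one_le (k := Γ.ord x)
    have e4 := len_mul_le (Γ.gen x) u
    rw [e1, e2]
    omega

lemma finite_len_eq [Finite V] (n : ℕ) : {g : Γ.DyerGroup | Γ.len g = n}.Finite := by
  let T : Set Γ.DyerGroup := Set.range Γ.gen ∪ (Set.range Γ.gen)⁻¹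
  have hT : T.Finite := (Set.finite_range _).union (Set.finite_range _).inv
  have : Finite T := hT
  refine ((List.finite_length_eq T n).image fun l => (l.map Subtype.val).prod).subset ?_
  intro g hg
  have hmem : g ∈ Γ.parabolic Set.univ := by rw [parabolic_univ]; trivial
  obtain ⟨w, h1, h2, rfl⟩ := exists_red_of_mem hmem
  obtain ⟨l, h3, h4, h5⟩ := exists_list_ev h1
  rw [Set.image_univ] at h4
  have hg : Γ.len (ev w) = n := hg
  rw [len_ev h2, ← h3] at hg
  refine ⟨l.attachWith (· ∈ T) h4, ?_, ?_⟩
  · simpa using hg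
  · simpa using h5

lemma finite_len_le [Finite V] (n : ℕ) : {g : Γ.DyerGroup | Γ.len g ≤ n}.Finite := by
  refine ((Set.finite_Iic n).biUnion fun i _ => finite_len_eq (Γ := Γ) i).subset ?_
  intro g hg
  exact Set.mem_biUnion (x := Γ.len g) hg rfl

/-- An element having every generator as a left descent exists only in spherical type: projecting
it to `D_{x,y}` gives adjacency of `x` and `y`, and `D_2` consists of prefixes of it. -/
lemma spherical_of_descents [Finite V] {g : Γ.DyerGroup}
    (hg : ∀ x, Γ.coc g (Γ.gen x, Γ.ord x) ≠ 0) : Γ.Spherical := by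
  refine ⟨fun x y hxy => ?_, ?_⟩
  · obtain ⟨h, hh, a, ha, rfl⟩ := exists_minRep {x, y} g
    have hx := hg x
    have hy := hg y
    rw [coc_mul_minRep hh ha (gen_mem (by simp))] at hx hy
    exact adj_of_coc_ne hxy hh hx hy
  · refine (finite_len_le (Γ := Γ) (Γ.len g)).subset ?_
    intro u hu
    obtain ⟨w, h1, h2, rfl⟩ := exists_red_of_mem hu
    have := len_le_of_descents (fun x _ => hg x) h1 h2
    exact (Nat.le_add_right _ _).trans this

end DyerGraph

namespace DyerGraph

variable {V : Type*} {Γ : DyerGraph V}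

/-! ### Growth series -/

/-- Unique length-additive factorisation `D = D_X · A_X` turns into a product of growth series. -/
lemma growthSeries_mul [Finite V] (X : Set V) :
    growthSeries (Γ.gen '' X) (Γ.parabolic X : Set Γ.DyerGroup) *
        growthSeries (Set.range Γ.gen) (Γ.minRep X) =
      growthSeries (Set.range Γ.gen) (Set.univ : Set Γ.DyerGroup) := by
  ext n
  have hfin : ∀ (P : Γ.DyerGroup → Prop) (i : ℕ), {g | P g ∧ Γ.len g = i}.Finite :=
    fun P i => (finite_len_eq (Γ := Γ) i).subset fun g hg => hg.2
  have hpar : ∀ i, {g ∈ (Γ.parabolic X : Set Γ.DyerGroup) | wordLength (Γ.gen '' X) g = i} =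
      {g | g ∈ Γ.parabolic X ∧ Γ.len g = i} := by
    intro i
    ext g
    constructor
    · rintro ⟨h1, h2⟩
      exact ⟨h1, (wordLength_eq_len h1).symm.trans h2⟩
    · rintro ⟨h1, h2⟩
      exact ⟨h1, (wordLength_eq_len h1).trans h2⟩
  have hmin : ∀ i, {g ∈ Γ.minRep X | wordLength (Set.range Γ.gen) g = i} =
      {g | g ∈ Γ.minRep X ∧ Γ.len g = i} := fun i => rfl
  have huniv : {g ∈ (Set.univ : Set Γ.DyerGroup) | wordLength (Set.range Γ.gen) g = n} =
      {g | True ∧ Γ.len g = n} := rfl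
  simp only [growthSeries, PowerSeries.coeff_mul, PowerSeries.coeff_mk, hpar, hmin, huniv]
  simp only [Set.ncard_eq_toFinset_card _ (hfin _ _)]
  simp only [← Nat.cast_mul, ← Nat.cast_sum, ← Finset.card_product]
  rw [← Finset.card_sigma]
  congr 1
  refine Finset.card_bij (fun q _ => q.2.1 * q.2.2) ?_ ?_ ?_
  · rintro ⟨⟨i, j⟩, h, a⟩ hq
    simp only [Finset.mem_sigma, Finset.mem_product, Set.Finite.mem_toFinset, Set.mem_ofPred_eq] at hq ⊢
    obtain ⟨hij, ⟨hh, hi⟩, ha, hj⟩ := hq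
    exact ⟨trivial, by rw [len_mul_minRep hh ha, hi, hj, Finset.HasAntidiagonal.mem_antidiagonal.1 hij]⟩
  · rintro ⟨⟨i, j⟩, h, a⟩ hq ⟨⟨i', j'⟩, h', a'⟩ hq' he
    simp only [Finset.mem_sigma, Finset.mem_product, Set.Finite.mem_toFinset, Set.mem_ofPred_eq] at hq hq' he
    obtain ⟨hij, ⟨hh, hi⟩, ha, hj⟩ := hq
    obtain ⟨hij', ⟨hh', hi'⟩, ha', hj'⟩ := hq'
    obtain ⟨rfl, rfl⟩ := minRep_unique hh hh' ha ha' he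
    subst hi hj hi' hj'
    rfl
  · intro g hg
    simp only [Set.Finite.mem_toFinset, Set.mem_ofPred_eq, true_and] at hg
    obtain ⟨h, hh, a, ha, rfl⟩ := exists_minRep X g
    refine ⟨⟨(Γ.len h, Γ.len a), h, a⟩, ?_, rfl⟩
    simp only [Finset.mem_sigma, Finset.mem_product, Set.Finite.mem_toFinset, Set.mem_ofPred_eq]
    exact ⟨Finset.HasAntidiagonal.mem_antidiagonal.2 ((len_mul_minRep hh ha).symm.trans hg),
      ⟨hh, trivial⟩, ha, trivial⟩

lemma isUnit_growthSeries :
    IsUnit (growthSeries (Set.range Γ.gen) (Set.univ : Set Γ.DyerGroup)) := by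
  rw [PowerSeries.isUnit_iff_constantCoeff, ← PowerSeries.coeff_zero_eq_constantCoeff_apply]
  have : {g ∈ (Set.univ : Set Γ.DyerGroup) | wordLength (Set.range Γ.gen) g = 0} = {1} := by
    ext g
    simp only [Set.mem_univ, true_and, Set.mem_ofPred_eq, Set.mem_singleton_iff]
    exact ⟨len_eq_zero, fun h => h ▸ len_one⟩
  rw [growthSeries, PowerSeries.coeff_mk, this]
  simp

lemma inverse_growthSeries_parabolic [Finite V] (X : Set V) :
    Ring.inverse (growthSeries (Γ.gen '' X) (Γ.parabolic X : Set Γ.DyerGroup)) =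
      growthSeries (Set.range Γ.gen) (Γ.minRep X) *
        Ring.inverse (growthSeries (Set.range Γ.gen) (Set.univ : Set Γ.DyerGroup)) := by
  have hD := isUnit_growthSeries (Γ := Γ)
  have hmul := growthSeries_mul (Γ := Γ) X
  have hX : IsUnit (growthSeries (Γ.gen '' X) (Γ.parabolic X : Set Γ.DyerGroup)) :=
    isUnit_of_mul_isUnit_left (hmul ▸ hD)
  refine hX.mul_left_cancel ?_
  rw [Ring.mul_inverse_cancel _ hX, ← mul_assoc, hmul, Ring.mul_inverse_cancel _ hD]

/-- Inclusion–exclusion: an element `g` lies in `A_Y` exactly when `Y` contains no left descent of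
`g`, and outside spherical type the set of non-descents of `g` is never empty, so the signs of the
`Y` with `g ∈ A_Y` cancel. -/
lemma sum_growthSeries_minRep [Fintype V] (hns : ¬ Γ.Spherical) :
    ∑ Y ∈ (Finset.univ : Finset V).powerset,
      (-1 : PowerSeries ℤ) ^ Y.card *
        growthSeries (Set.range Γ.gen) (Γ.minRep (↑Y : Set V)) = 0 := by
  ext n
  let L := (finite_len_eq (Γ := Γ) n).toFinset
  have hcoeff : ∀ Y : Finset V, PowerSeries.coeff n ((-1 : PowerSeries ℤ) ^ Y.card *
      growthSeries (Set.range Γ.gen) (Γ.minRep (↑Y : Set V))) =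
      ∑ g ∈ L, if g ∈ Γ.minRep (↑Y : Set V) then (-1 : ℤ) ^ Y.card else 0 := by
    intro Y
    have h1 : ((-1 : PowerSeries ℤ) ^ Y.card) = PowerSeries.C ((-1 : ℤ) ^ Y.card) := by simp
    have h2 : {g ∈ Γ.minRep (↑Y : Set V) | wordLength (Set.range Γ.gen) g = n} =
        ↑(L.filter (· ∈ Γ.minRep (↑Y : Set V))) := by
      ext g
      simp only [Set.mem_ofPred_eq, Finset.coe_filter, L, Set.Finite.mem_toFinset]
      exact and_comm
    rw [h1, PowerSeries.coeff_C_mul, growthSeries, PowerSeries.coeff_mk, h2, Set.ncard_coe_finset,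
      ← Finset.sum_filter, Finset.sum_const, nsmul_eq_mul, mul_comm]
  rw [map_sum, Finset.sum_congr rfl fun Y _ => hcoeff Y, Finset.sum_comm, map_zero]
  refine Finset.sum_eq_zero fun g _ => ?_
  let R : Finset V := Finset.univ.filter fun x => Γ.coc g (Γ.gen x, Γ.ord x) = 0
  have hR : R.Nonempty := by
    by_contra hemp
    refine hns (spherical_of_descents (g := g) fun x hx => hemp ⟨x, ?_⟩)
    simpa [R] using hx
  rw [← Finset.sum_filter]
  have : (Finset.univ : Finset V).powerset.filter (fun Y : Finset V => g ∈ Γ.minRep (↑Y : Set V)) =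
      R.powerset := by
    ext Y
    simp only [Finset.mem_filter, Finset.mem_powerset, true_and, implies_true,
      mem_minRep_iff, Finset.mem_coe, Finset.subset_iff, R, Finset.mem_univ]
  rw [this]
  exact Finset.sum_powerset_neg_one_pow_card_of_nonempty hR

end DyerGraph

/-- For a Dyer system `(D,V)` not of spherical type,
`(-1)^{|V|+1} 𝒢_{(D,V)}(t)⁻¹ = ∑_{Y ⊊ V} (-1)^{|Y|} 𝒢_{(D_Y,Y)}(t)⁻¹`. -/
theorem growthSeries_inv_alternating_sum_of_not_spherical
    {V : Type} [Fintype V] (Γ : DyerGraph V) (h : ¬ Γ.Spherical) :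
    (-1 : PowerSeries ℤ) ^ (Fintype.card V + 1) *
        Ring.inverse (growthSeries (Set.range Γ.gen) (Set.univ : Set Γ.DyerGroup)) =
      ∑ Y ∈ (Finset.univ : Finset V).powerset.erase Finset.univ,
        (-1 : PowerSeries ℤ) ^ Y.card *
          Ring.inverse (growthSeries (Γ.gen '' (↑Y : Set V)) (Γ.parabolic (↑Y : Set V) : Set Γ.DyerGroup)) := by
  have hsum : ∑ Y ∈ (Finset.univ : Finset V).powerset,
      (-1 : PowerSeries ℤ) ^ Y.card *
        Ring.inverse (growthSeries (Γ.gen '' (↑Y : Set V))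
          (Γ.parabolic (↑Y : Set V) : Set Γ.DyerGroup)) = 0 := by
    simp only [DyerGraph.inverse_growthSeries_parabolic, ← mul_assoc]
    rw [← Finset.sum_mul, DyerGraph.sum_growthSeries_minRep h, zero_mul]
  rw [← Finset.add_sum_erase _ _ (Finset.mem_powerset_self Finset.univ), Finset.card_univ,
    Finset.coe_univ, Set.image_univ, DyerGraph.parabolic_univ, Subgroup.coe_top] at hsum
  rw [pow_succ, mul_neg_one, neg_mul]
  exact neg_eq_of_add_eq_zero_right hsum
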